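/- Let V > 0, σ > 0, μ ∈ ℝ, and let f(b) = (1/(√(2π)·σ·b))·exp(−(ln b − μ)²/(2σ²)) be the log-normal density. Define F(b) = ∫₀ᵇ f(t) dt and s(b) = (V − b)·F(b). Then s''(V) < 0, and s'' has at most one root in the open interval (0, V): for any b₁, b₂ ∈ (0, V) with s''(b₁) = 0 and s''(b₂) = 0, one has b₁ = b₂. -/

import Mathlib

/-!
For a density `f` on `(0, ∞)` and `F b = ∫₀ᵇ f`, the surplus `s b = (V - b) F b` has
`s'' b = (V - b) f' b - 2 f b`. At `b = V` only the term `-2 f V` survives. For `0 < b < V`,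
dividing by `f b` turns `s'' b = 0` into `b f' b / f b = 2 b / (V - b)`, whose right-hand side
strictly increases in `b`, so there is at most one root as soon as the elasticity `b f' b / f b`
is nonincreasing. The log-normal elasticity is `-(1 + (log b - μ) / σ²)`.
-/

open MeasureTheory Set Filter Topology

section ExpectedSurplus

/-- The expected surplus `(V - b) F(b)` of a bidder with valuation `V` who bids `b`, where
`F(b) = ∫₀ᵇ f` is the probability of winning when the highest competing bid has density `f`. -/
noncomputable def expectedSurplus (V : ℝ) (f : ℝ → ℝ) (b : ℝ) : ℝ :=
  (V - b) * ∫ t in (0 : ℝ)..b, f t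

variable {V b : ℝ} {f : ℝ → ℝ}

lemma hasDerivAt_integral_zero_right (hcont : ContinuousOn f (Ioi 0))
    (hint : IntervalIntegrable f volume 0 b) (hb : 0 < b) :
    HasDerivAt (fun x => ∫ t in (0 : ℝ)..x, f t) (f b) b :=
  intervalIntegral.integral_hasDerivAt_right hint
    (hcont.stronglyMeasurableAtFilter isOpen_Ioi b hb) (hcont.continuousAt (Ioi_mem_nhds hb))

lemma hasDerivAt_expectedSurplus (hcont : ContinuousOn f (Ioi 0))
    (hint : IntervalIntegrable f volume 0 b) (hb : 0 < b) :
    HasDerivAt (expectedSurplus V f) ((V - b) * f b - ∫ t in (0 : ℝ)..b, f t) b :=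
  (((hasDerivAt_id' b).const_sub V).mul
    (hasDerivAt_integral_zero_right hcont hint hb)).congr_deriv (by ring)

lemma deriv_deriv_expectedSurplus (hdiff : DifferentiableOn ℝ f (Ioi 0))
    (hint : ∀ x, 0 < x → IntervalIntegrable f volume 0 x) (hb : 0 < b) :
    deriv (deriv (expectedSurplus V f)) b = (V - b) * deriv f b - 2 * f b := by
  have deriv_eq : deriv (expectedSurplus V f) =ᶠ[𝓝 b]
      fun x => (V - x) * f x - ∫ t in (0 : ℝ)..x, f t := by
    filter_upwards [Ioi_mem_nhds hb] with x hx
    exact (hasDerivAt_expectedSurplus hdiff.continuousOn (hint x hx) hx).deriv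
  have hasDerivAt_f : HasDerivAt f (deriv f b) b :=
    (hdiff.differentiableAt (Ioi_mem_nhds hb)).hasDerivAt
  have hasDerivAt_F := hasDerivAt_integral_zero_right hdiff.continuousOn (hint b hb) hb
  rw [deriv_eq.deriv_eq]
  exact ((((hasDerivAt_id' b).const_sub V).mul hasDerivAt_f).sub hasDerivAt_F).deriv.trans
    (by ring)

lemma deriv_deriv_expectedSurplus_self_neg (hdiff : DifferentiableOn ℝ f (Ioi 0))
    (hint : ∀ x, 0 < x → IntervalIntegrable f volume 0 x) (hV : 0 < V) (hfV : 0 < f V) :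
    deriv (deriv (expectedSurplus V f)) V < 0 := by
  rw [deriv_deriv_expectedSurplus hdiff hint hV]
  linarith

lemma deriv_deriv_expectedSurplus_eq_zero_iff (hdiff : DifferentiableOn ℝ f (Ioi 0))
    (hint : ∀ x, 0 < x → IntervalIntegrable f volume 0 x) (hb : b ∈ Ioo 0 V) (hfb : f b ≠ 0) :
    deriv (deriv (expectedSurplus V f)) b = 0 ↔ b * logDeriv f b = 2 * b / (V - b) := by
  have hb₀ : b ≠ 0 := hb.1.ne'
  have hVb : V - b ≠ 0 := (sub_pos.mpr hb.2).ne'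
  rw [deriv_deriv_expectedSurplus hdiff hint hb.1, logDeriv_apply, sub_eq_zero]
  field_simp

lemma strictMonoOn_two_mul_div_sub : StrictMonoOn (fun b : ℝ => 2 * b / (V - b)) (Ioo 0 V) := by
  intro a _ b hb hab
  have hVb : 0 < V - b := sub_pos.mpr hb.2
  have hb₀ : 0 ≤ 2 * b := by linarith [hb.1]
  dsimp only
  gcongr

theorem subsingleton_roots_deriv_deriv_expectedSurplus (hdiff : DifferentiableOn ℝ f (Ioi 0))
    (hint : ∀ x, 0 < x → IntervalIntegrable f volume 0 x) (hf : ∀ x ∈ Ioo 0 V, f x ≠ 0)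
    (elasticity_antitone : AntitoneOn (fun x => x * logDeriv f x) (Ioo 0 V)) :
    {b ∈ Ioo 0 V | deriv (deriv (expectedSurplus V f)) b = 0}.Subsingleton := by
  rintro a ⟨ha, root_a⟩ b ⟨hb, root_b⟩
  rw [deriv_deriv_expectedSurplus_eq_zero_iff hdiff hint ha (hf a ha)] at root_a
  rw [deriv_deriv_expectedSurplus_eq_zero_iff hdiff hint hb (hf b hb)] at root_b
  have gap_strictMono := strictMonoOn_two_mul_div_sub.add_monotone elasticity_antitone.neg
  exact gap_strictMono.injOn ha hb (by simp [root_a, root_b])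

end ExpectedSurplus

section LogNormal

/-- The density at `x` of the log-normal distribution, the law of `exp X` for `X` normal with
mean `μ` and standard deviation `σ`. It is the density only for `0 < x`: it is not truncated
to `0` on the negative axis. -/
noncomputable def logNormalDensity (μ σ x : ℝ) : ℝ :=
  1 / (√(2 * Real.pi) * σ * x) * Real.exp (-(Real.log x - μ) ^ 2 / (2 * σ ^ 2))

variable {μ σ x : ℝ}

lemma logNormalDensity_pos (hσ : 0 < σ) (hx : 0 < x) : 0 < logNormalDensity μ σ x := by
  unfold logNormalDensity
  positivity

lemma measurable_logNormalDensity : Measurable (logNormalDensity μ σ) := by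
  unfold logNormalDensity
  fun_prop

lemma logNormalDensity_eq_mul_exp (hx : 0 < x) :
    logNormalDensity μ σ x = (√(2 * Real.pi) * σ)⁻¹ *
      Real.exp (-Real.log x - (Real.log x - μ) ^ 2 / (2 * σ ^ 2)) := by
  rw [logNormalDensity, sub_eq_add_neg (-Real.log x), Real.exp_add, Real.exp_neg (Real.log x),
    Real.exp_log hx, one_div, mul_inv _ x, neg_div, mul_assoc]

-- The bound is the value at the mode `x = exp (μ - σ ^ 2)`.
lemma logNormalDensity_le (hσ : 0 < σ) (hx : 0 < x) :
    logNormalDensity μ σ x ≤ (√(2 * Real.pi) * σ)⁻¹ * Real.exp (σ ^ 2 / 2 - μ) := by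
  have complete_square : σ ^ 2 / 2 - μ - (-Real.log x - (Real.log x - μ) ^ 2 / (2 * σ ^ 2)) =
      (Real.log x - μ + σ ^ 2) ^ 2 / (2 * σ ^ 2) := by
    field_simp
    ring
  have exponent_le :
      -Real.log x - (Real.log x - μ) ^ 2 / (2 * σ ^ 2) ≤ σ ^ 2 / 2 - μ := by
    rw [← sub_nonneg, complete_square]
    positivity
  rw [logNormalDensity_eq_mul_exp hx]
  exact mul_le_mul_of_nonneg_left (Real.exp_le_exp.mpr exponent_le) (by positivity)

lemma intervalIntegrable_logNormalDensity (hσ : 0 < σ) (hx : 0 < x) :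
    IntervalIntegrable (logNormalDensity μ σ) volume 0 x := by
  rw [intervalIntegrable_iff_integrableOn_Ioc_of_le hx.le]
  refine Measure.integrableOn_of_bounded measure_Ioc_lt_top.ne
    measurable_logNormalDensity.aestronglyMeasurable
    (M := (√(2 * Real.pi) * σ)⁻¹ * Real.exp (σ ^ 2 / 2 - μ)) ?_
  filter_upwards [ae_restrict_mem measurableSet_Ioc] with t ht
  rw [Real.norm_of_nonneg (logNormalDensity_pos hσ ht.1).le]
  exact logNormalDensity_le hσ ht.1

lemma hasDerivAt_logNormalDensity (hx : 0 < x) :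
    HasDerivAt (logNormalDensity μ σ)
      (logNormalDensity μ σ x * (-(1 + (Real.log x - μ) / σ ^ 2) / x)) x := by
  have hasDerivAt_log := Real.hasDerivAt_log hx.ne'
  have hasDerivAt_exponent :
      HasDerivAt (fun y => -Real.log y - (Real.log y - μ) ^ 2 / (2 * σ ^ 2))
        (-(1 + (Real.log x - μ) / σ ^ 2) / x) x :=
    (hasDerivAt_log.neg.sub
      (((hasDerivAt_log.sub_const μ).pow 2).div_const (2 * σ ^ 2))).congr_deriv
      (by field_simp; ring)
  have eq_mul_exp : logNormalDensity μ σ =ᶠ[𝓝 x] fun y => (√(2 * Real.pi) * σ)⁻¹ *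
      Real.exp (-Real.log y - (Real.log y - μ) ^ 2 / (2 * σ ^ 2)) := by
    filter_upwards [Ioi_mem_nhds hx] with y hy using logNormalDensity_eq_mul_exp hy
  rw [logNormalDensity_eq_mul_exp hx, mul_assoc]
  exact (hasDerivAt_exponent.exp.const_mul _).congr_of_eventuallyEq eq_mul_exp

lemma differentiableOn_logNormalDensity : DifferentiableOn ℝ (logNormalDensity μ σ) (Ioi 0) :=
  fun _ hx => (hasDerivAt_logNormalDensity hx).differentiableAt.differentiableWithinAt

lemma mul_logDeriv_logNormalDensity (hσ : 0 < σ) (hx : 0 < x) :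
    x * logDeriv (logNormalDensity μ σ) x = -(1 + (Real.log x - μ) / σ ^ 2) := by
  rw [logDeriv_apply, (hasDerivAt_logNormalDensity hx).deriv,
    mul_div_cancel_left₀ _ (logNormalDensity_pos hσ hx).ne', mul_div_cancel₀ _ hx.ne']

lemma antitoneOn_mul_logDeriv_logNormalDensity (hσ : 0 < σ) :
    AntitoneOn (fun x => x * logDeriv (logNormalDensity μ σ) x) (Ioi 0) := by
  intro x (hx : 0 < x) y (hy : 0 < y) hxy
  simp only [mul_logDeriv_logNormalDensity hσ hx, mul_logDeriv_logNormalDensity hσ hy]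
  gcongr

end LogNormal

/-- For the log-normal density, s''(V) < 0 and s'' has at most
one root in (0, V). -/
theorem surplus_second_deriv_logNormal_roots (V σ μ : ℝ) (hV : 0 < V) (hσ : 0 < σ)
    (f F s : ℝ → ℝ)
    (hf : f = fun b =>
      1 / (Real.sqrt (2 * Real.pi) * σ * b) * Real.exp (-(Real.log b - μ) ^ 2 / (2 * σ ^ 2)))
    (hF : F = fun b => ∫ t in (0 : ℝ)..b, f t)
    (hs : s = fun b => (V - b) * F b) :
    deriv (deriv s) V < 0 ∧
    ∀ b₁ ∈ Set.Ioo (0 : ℝ) V, ∀ b₂ ∈ Set.Ioo (0 : ℝ) V,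
      deriv (deriv s) b₁ = 0 → deriv (deriv s) b₂ = 0 → b₁ = b₂ := by
  obtain rfl : f = logNormalDensity μ σ := hf
  subst hF
  obtain rfl : s = expectedSurplus V (logNormalDensity μ σ) := hs
  have hdiff := differentiableOn_logNormalDensity (μ := μ) (σ := σ)
  have hint (x : ℝ) (hx : 0 < x) := intervalIntegrable_logNormalDensity (μ := μ) hσ hx
  have roots_subsingleton := subsingleton_roots_deriv_deriv_expectedSurplus (V := V) hdiff hint
    (fun x hx => (logNormalDensity_pos hσ hx.1).ne')
    ((antitoneOn_mul_logDeriv_logNormalDensity hσ).mono Ioo_subset_Ioi_self)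
  exact ⟨deriv_deriv_expectedSurplus_self_neg hdiff hint hV (logNormalDensity_pos hσ hV),
    fun b₁ hb₁ b₂ hb₂ root₁ root₂ => roots_subsingleton ⟨hb₁, root₁⟩ ⟨hb₂, root₂⟩⟩
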